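/- Let γ: ℝ/ℤ → ℝ³ be a C² injective closed curve parametrized by arc length (|γ′| ≡ 1, total length 1), let c = γ(0), r > 0, and let η = I_{c,r} ∘ γ restricted to the open interval (0,1). Then ∬_{(0,1)²} ( 1/|η(s)−η(t)|² − 1/ℓ_η(s,t)² ) · |η′(s)| · |η′(t)| ds dt = ∬_{(ℝ/ℤ)²} ( 1/|γ(s)−γ(t)|² − 1/d(s,t)² ) ds dt − 4, where ℓ_η(s,t) = | ∫_s^t |η′(u)| du | is the arc length of η between parameters s and t; both sides are finite. (The Möbius invariance of E⁽²⁾∘ holds even when the image is an open long knot.) -/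

import Mathlib

open MeasureTheory

noncomputable section

/-- ℝ³ with the Euclidean norm. -/
abbrev E3 := EuclideanSpace ℝ (Fin 3)

/-- The arc-length distance on ℝ/ℤ, written for parameters `s, t ∈ [0,1]`. -/
def arcd (s t : ℝ) : ℝ := min |s - t| (1 - |s - t|)

/-- Inversion in the sphere of center `c` and radius `r`. -/
def inv3 (c : E3) (r : ℝ) (x : E3) : E3 := c + (r ^ 2 / ‖x - c‖ ^ 2) • (x - c)

/-- The arc length of `η` between the parameters `s` and `t`. -/
def arcLen (η : ℝ → E3) (s t : ℝ) : ℝ := |∫ u in s..t, ‖deriv η u‖|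

/-!
The round circle of length `1` inverts to a straight line, whose energy as a long knot is `0`, while
its energy as a closed knot is `4`; so it suffices to compare `γ` with the circle.
The chord terms `|γ′(s)| |γ′(t)| / |γ(s) - γ(t)|²` are invariant under inversions. For a line
traversed with arc length `F`, the length term `F′(s) F′(t) / (F(t) - F(s))²`, renormalized by
`1 / (t - s)²`, is `∂ₛ ∂ₜ log |(F(t) - F(s)) / (t - s)|`, so its integral over `[a, 1 - a]²` is a
combination of boundary values, `log F′(a) + log F′(1 - a) - 2 log ((F(1 - a) - F(a)) / (1 - 2a))`.
The speed of the inverse of `γ` differs from `r²` times that of the inverse of the circle by a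
bounded amount, and both blow up at the ends. Hence, as `a → 0`, the boundary terms of `γ` and of
the circle differ by `2 log r² - 2 log r² + o(1)`.
-/

section SecantKernel

open Set Filter Topology

/-- The length term of the energy density of a curve with signed arc length `F`, minus the one for
unit speed; off the diagonal it is `∂ₛ ∂ₜ log |slope F s t|`, and on the diagonal it is `0`. -/
def secantKernel (F : ℝ → ℝ) (s t : ℝ) : ℝ :=
  deriv F s * deriv F t / (F t - F s) ^ 2 - 1 / (t - s) ^ 2

theorem intervalIntegral_eq_sub_of_hasDerivAt_of_tendsto_nhdsNE {f f' : ℝ → ℝ} {a b c L : ℝ}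
    (hc : c ∈ Ioo a b) (hderiv : ∀ x ∈ Icc a b, x ≠ c → HasDerivAt f (f' x) x)
    (hlim : Tendsto f (𝓝[≠] c) (𝓝 L)) (hint : IntervalIntegrable f' volume a b) :
    ∫ x in a..b, f' x = f b - f a := by
  have hderiv' : ∀ x ∈ Icc a b, x ≠ c → HasDerivAt (Function.update f c L) (f' x) x :=
    fun x hx hxc ↦ (hderiv x hx hxc).congr_of_eventuallyEq <| by
      filter_upwards [isOpen_ne.mem_nhds hxc] with y hy using Function.update_of_ne hy _ _
  have hcont : ContinuousOn (Function.update f c L) (Icc a b) := by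
    intro x hx
    obtain rfl | hxc := eq_or_ne x c
    · exact (continuousAt_update_same.2 hlim).continuousWithinAt
    · exact (hderiv' x hx hxc).continuousAt.continuousWithinAt
  rw [integral_eq_of_hasDerivAt_off_countable_of_le _ _ (hc.1.trans hc.2).le
    (countable_singleton c) hcont (fun x hx ↦ hderiv' x (Ioo_subset_Icc_self hx.1) hx.2) hint,
    Function.update_of_ne hc.2.ne', Function.update_of_ne hc.1.ne]

variable {F : ℝ → ℝ} {U : Set ℝ} {a b s t : ℝ}

theorem exists_abs_iteratedDeriv_le {k n : ℕ} (hU : IsOpen U) (hF : ContDiffOn ℝ n F U)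
    (hk : k ≤ n) (hab : Icc a b ⊆ U) : ∃ C, ∀ x ∈ Icc a b, |iteratedDeriv k F x| ≤ C :=
  isCompact_Icc.exists_bound_of_continuousOn <|
    ((hF.continuousOn_iteratedDerivWithin (mod_cast hk) hU.uniqueDiffOn).congr
      (iteratedDerivWithin_of_isOpen hU).symm).mono hab

theorem abs_trapezoid_sub_le {ζ : ℝ} (hU : IsOpen U) (hF : ContDiffOn ℝ 3 F U)
    (hst : uIcc s t ⊆ U) (hζ : ∀ x ∈ uIcc s t, |iteratedDeriv 3 F x| ≤ ζ) :
    |(t - s) * ((deriv F s + deriv F t) / 2) - (F t - F s)| ≤ |t - s| ^ 3 * ζ / 12 := by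
  obtain rfl | hne := eq_or_ne s t
  · simp
  have hF' : ContDiffOn ℝ 2 (deriv F) U := hF.deriv_of_isOpen hU le_rfl
  have hint : ∫ x in s..t, deriv F x = F t - F s :=
    intervalIntegral.integral_deriv_eq_sub
      (fun x hx ↦ (hF.differentiableOn (by norm_num)).differentiableAt (hU.mem_nhds (hst hx)))
      (hF'.continuousOn.mono hst).intervalIntegrable
  have hbound : ∀ x, |iteratedDerivWithin 2 (deriv F) (uIcc s t) x| ≤ ζ := by
    intro x
    by_cases hx : x ∈ uIcc s t
    · rw [iteratedDerivWithin_eq_iteratedDeriv (uniqueDiffOn_uIcc hne)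
        (hF'.contDiffAt (hU.mem_nhds (hst hx))) hx, ← iteratedDeriv_succ']
      exact hζ x hx
    · rw [iteratedDerivWithin_succ,
        derivWithin_zero_of_notMem_closure (by rwa [uIcc, isClosed_Icc.closure_eq]), abs_zero]
      exact (abs_nonneg _).trans (hζ s left_mem_uIcc)
  have key := trapezoidal_error_le_of_c2 (hF'.mono hst) hbound one_pos
  rw [trapezoidal_error, trapezoidal_integral_one, hint] at key
  rw [← mul_div_assoc, mul_div_right_comm]
  simpa using key

/-- With `E` the error of the trapezoidal rule on `[s, t]`, the numerator of the kernel is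
`pq h² - D² = -h² (p - q)² / 4 + E (h (p + q) / 2 + D)`. -/
theorem abs_div_sq_sub_inv_sq_le {p q D h m B L ζ : ℝ} (hm : 0 < m) (hh : h ≠ 0)
    (hp : |p| ≤ B) (hq : |q| ≤ B) (hpq : |p - q| ≤ L * |h|) (hDm : m * |h| ≤ |D|)
    (hDB : |D| ≤ B * |h|) (hE : |h * ((p + q) / 2) - D| ≤ |h| ^ 3 * ζ / 12) :
    |p * q / D ^ 2 - 1 / h ^ 2| ≤ (L ^ 2 / 4 + ζ * B / 6) / m ^ 2 := by
  have hh0 : 0 < |h| := abs_pos.2 hh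
  have hD0 : 0 < |D| := (mul_pos hm hh0).trans_le hDm
  have hD : D ≠ 0 := abs_pos.1 hD0
  have hsum : |h * ((p + q) / 2) + D| ≤ 2 * B * |h| := by
    have : |(p + q) / 2| ≤ B := by
      rw [abs_div, abs_two]; linarith [abs_add_le p q]
    calc |h * ((p + q) / 2) + D| ≤ |h| * |(p + q) / 2| + |D| := by
          rw [← abs_mul]; exact abs_add_le _ _
      _ ≤ |h| * B + B * |h| := by gcongr
      _ = 2 * B * |h| := by ring
  have hnum : |-(h * (p - q)) ^ 2 / 4 + (h * ((p + q) / 2) - D) * (h * ((p + q) / 2) + D)|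
      ≤ (L ^ 2 / 4 + ζ * B / 6) * |h| ^ 4 := by
    calc _ ≤ (|h| * |p - q|) ^ 2 / 4
          + |h * ((p + q) / 2) - D| * |h * ((p + q) / 2) + D| := by
          refine (abs_add_le _ _).trans_eq ?_
          rw [abs_mul (_ - _), neg_div, abs_neg, abs_div, abs_pow, abs_mul h,
            abs_of_pos (four_pos : (0 : ℝ) < 4)]
      _ ≤ (|h| * (L * |h|)) ^ 2 / 4 + |h| ^ 3 * ζ / 12 * (2 * B * |h|) := by
          gcongr
          exact (abs_nonneg _).trans hE
      _ = _ := by ring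
  have hsplit : p * q / D ^ 2 - 1 / h ^ 2 =
      (-(h * (p - q)) ^ 2 / 4 + (h * ((p + q) / 2) - D) * (h * ((p + q) / 2) + D))
        / (|D| ^ 2 * |h| ^ 2) := by
    rw [sq_abs, sq_abs]; field_simp; ring
  rw [hsplit, abs_div, abs_of_pos (show 0 < |D| ^ 2 * |h| ^ 2 by positivity),
    div_le_div_iff₀ (by positivity) (by positivity)]
  have hC : 0 ≤ (L ^ 2 / 4 + ζ * B / 6) * |h| ^ 4 := (abs_nonneg _).trans hnum
  have hC' : 0 ≤ L ^ 2 / 4 + ζ * B / 6 := nonneg_of_mul_nonneg_left hC (by positivity)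
  calc _ ≤ (L ^ 2 / 4 + ζ * B / 6) * |h| ^ 4 * m ^ 2 := by gcongr
    _ = (L ^ 2 / 4 + ζ * B / 6) * ((m * |h|) ^ 2 * |h| ^ 2) := by ring
    _ ≤ _ := by gcongr

theorem exists_pos_mul_abs_sub_le (hU : IsOpen U) (hF : ContDiffOn ℝ 1 F U)
    (hpos : ∀ x ∈ U, 0 < deriv F x) (hab : Icc a b ⊆ U) :
    ∃ m > 0, ∀ s ∈ Icc a b, ∀ t ∈ Icc a b, m * |t - s| ≤ |F t - F s| := by
  rcases (Icc a b).eq_empty_or_nonempty with hempty | hne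
  · exact ⟨1, one_pos, by simp [hempty]⟩
  obtain ⟨x₀, hx₀, hmin⟩ := isCompact_Icc.exists_isMinOn hne
    ((hF.deriv_of_isOpen (m := 0) hU (by norm_num)).continuousOn.mono hab)
  refine ⟨deriv F x₀, hpos x₀ (hab hx₀), fun s hs t ht ↦ ?_⟩
  wlog hst : s ≤ t generalizing s t
  · simpa only [abs_sub_comm] using this t ht s hs (le_of_not_ge hst)
  rw [abs_of_nonneg (sub_nonneg.2 hst)]
  refine le_trans ?_ (le_abs_self _)
  exact (convex_Icc a b).mul_sub_le_image_sub_of_le_deriv (hF.continuousOn.mono hab)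
    ((hF.differentiableOn one_ne_zero).mono (interior_subset.trans hab))
    (fun x hx ↦ hmin (interior_subset hx)) s hs t ht hst

theorem exists_abs_secantKernel_le (hU : IsOpen U) (hF : ContDiffOn ℝ 3 F U)
    (hpos : ∀ x ∈ U, 0 < deriv F x) (hab : Icc a b ⊆ U) :
    ∃ C, ∀ s ∈ Icc a b, ∀ t ∈ Icc a b, |secantKernel F s t| ≤ C := by
  obtain ⟨B, hB⟩ := exists_abs_iteratedDeriv_le (k := 1) hU hF (by norm_num) hab
  obtain ⟨L, hL⟩ := exists_abs_iteratedDeriv_le (k := 2) hU hF (by norm_num) hab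
  obtain ⟨ζ, hζ⟩ := exists_abs_iteratedDeriv_le (k := 3) hU hF le_rfl hab
  simp only [iteratedDeriv_succ, iteratedDeriv_zero] at hB hL
  have hF' : ContDiffOn ℝ 2 (deriv F) U := hF.deriv_of_isOpen hU le_rfl
  have hdF : ∀ x ∈ Icc a b, DifferentiableAt ℝ F x := fun x hx ↦
    (hF.differentiableOn (by norm_num)).differentiableAt (hU.mem_nhds (hab hx))
  have hdF' : ∀ x ∈ Icc a b, DifferentiableAt ℝ (deriv F) x := fun x hx ↦
    (hF'.differentiableOn (by norm_num)).differentiableAt (hU.mem_nhds (hab hx))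
  obtain ⟨m, hm, hmul⟩ := exists_pos_mul_abs_sub_le hU (hF.of_le (by norm_num)) hpos hab
  refine ⟨max 0 ((L ^ 2 / 4 + ζ * B / 6) / m ^ 2), fun s hs t ht ↦ ?_⟩
  obtain rfl | hst := eq_or_ne s t
  · simp [secantKernel]
  have hsub : uIcc s t ⊆ Icc a b := ordConnected_Icc.uIcc_subset hs ht
  refine le_max_of_le_right (abs_div_sq_sub_inv_sq_le hm (sub_ne_zero.2 hst.symm) (hB s hs)
    (hB t ht) ?_ (hmul s hs t ht) ?_
    (abs_trapezoid_sub_le hU hF (hsub.trans hab) fun x hx ↦ hζ x (hsub hx)))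
  · rw [abs_sub_comm]
    exact (convex_Icc a b).norm_image_sub_le_of_norm_deriv_le hdF' hL hs ht
  · exact (convex_Icc a b).norm_image_sub_le_of_norm_deriv_le hdF hB hs ht

theorem integrableOn_secantKernel (hU : IsOpen U) (hF : ContDiffOn ℝ 3 F U)
    (hpos : ∀ x ∈ U, 0 < deriv F x) (hab : Icc a b ⊆ U) :
    IntegrableOn (fun p : ℝ × ℝ ↦ secantKernel F p.1 p.2) (Icc a b ×ˢ Icc a b) := by
  obtain ⟨C, hC⟩ := exists_abs_secantKernel_le hU hF hpos hab
  have hms : MeasurableSet (Icc a b ×ˢ Icc a b) := measurableSet_Icc.prod measurableSet_Icc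
  have hFc := hF.continuousOn.mono hab
  have hfst : AEMeasurable (fun p : ℝ × ℝ ↦ F p.1) (volume.restrict (Icc a b ×ˢ Icc a b)) :=
    (hFc.comp continuousOn_fst fun p hp ↦ hp.1).aemeasurable hms
  have hsnd : AEMeasurable (fun p : ℝ × ℝ ↦ F p.2) (volume.restrict (Icc a b ×ˢ Icc a b)) :=
    (hFc.comp continuousOn_snd fun p hp ↦ hp.2).aemeasurable hms
  have hmeas : AEMeasurable (fun p : ℝ × ℝ ↦ secantKernel F p.1 p.2)
      (volume.restrict (Icc a b ×ˢ Icc a b)) :=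
    ((((measurable_deriv F).comp measurable_fst).mul
      ((measurable_deriv F).comp measurable_snd)).aemeasurable.div
        ((hsnd.sub hfst).pow_const 2)).sub (by fun_prop)
  refine .of_bound (isCompact_Icc.prod isCompact_Icc).measure_lt_top
    hmeas.aestronglyMeasurable C ?_
  filter_upwards [ae_restrict_mem hms] with p hp using hC _ hp.1 _ hp.2

theorem dslope_pos (hUc : U.OrdConnected) (hF : DifferentiableOn ℝ F U)
    (hpos : ∀ x ∈ U, 0 < deriv F x) (hs : s ∈ U) (ht : t ∈ U) : 0 < dslope F s t := by
  obtain rfl | hst := eq_or_ne t s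
  · simpa using hpos t ht
  rw [dslope_of_ne _ hst]
  have hmono : StrictMonoOn F U := strictMonoOn_of_deriv_pos hUc.convex hF.continuousOn
    fun x hx ↦ hpos x (interior_subset hx)
  exact hmono.slope_pos hs ht hst.symm

theorem hasDerivAt_log_dslope (hU : IsOpen U) (hUc : U.OrdConnected) (hF : DifferentiableOn ℝ F U)
    (hpos : ∀ x ∈ U, 0 < deriv F x) (hs : s ∈ U) (ht : t ∈ U) (hst : s ≠ t) :
    HasDerivAt (fun x ↦ Real.log (dslope F t x)) (deriv F s / (F s - F t) - 1 / (s - t)) s := by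
  have hslope := (dslope_pos hUc hF hpos ht hs).ne'
  have hsub : s - t ≠ 0 := sub_ne_zero.2 hst
  rw [dslope_of_ne _ hst, slope_def_field] at hslope
  have hlog := (((hF.differentiableAt (hU.mem_nhds hs)).hasDerivAt.sub_const (F t)).div
    ((hasDerivAt_id s).sub_const t) hsub).log hslope
  have heq : (fun x ↦ Real.log (dslope F t x)) =ᶠ[𝓝 s]
      fun x ↦ Real.log ((F x - F t) / (x - t)) := by
    filter_upwards [isOpen_ne.mem_nhds hst] with x hx
    rw [dslope_of_ne _ hx, slope_def_field]
  refine (hlog.congr_of_eventuallyEq heq).congr_deriv ?_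
  have : F s - F t ≠ 0 := (div_ne_zero_iff.1 hslope).1
  simp only [id_eq, Pi.div_apply]
  field_simp

theorem continuousOn_log_dslope (hU : IsOpen U) (hUc : U.OrdConnected)
    (hF : DifferentiableOn ℝ F U) (hpos : ∀ x ∈ U, 0 < deriv F x) (ht : t ∈ U) :
    ContinuousOn (fun x ↦ Real.log (dslope F t x)) U :=
  ((continuousOn_dslope (hU.mem_nhds ht)).2
    ⟨hF.continuousOn, hF.differentiableAt (hU.mem_nhds ht)⟩).log
    fun _ hx ↦ (dslope_pos hUc hF hpos ht hx).ne'

theorem tendsto_taylor_remainder_div_sq (hF : ∀ᶠ x in 𝓝 s, DifferentiableAt ℝ F x)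
    (hF' : DifferentiableAt ℝ (deriv F) s) :
    Tendsto (fun t ↦ (F t - F s - deriv F s * (t - s)) / (t - s) ^ 2) (𝓝[≠] s)
      (𝓝 (deriv (deriv F) s / 2)) := by
  have hcont : ContinuousAt F s := hF.self_of_nhds.continuousAt
  refine HasDerivAt.lhopital_zero_nhdsNE (f' := fun t ↦ deriv F t - deriv F s)
    (g' := fun t ↦ 2 * (t - s)) ?_ (.of_forall fun t ↦ ?_) ?_ ?_ ?_ ?_
  · filter_upwards [nhdsWithin_le_nhds hF] with t ht
    exact ((ht.hasDerivAt.sub_const (F s)).sub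
      (((hasDerivAt_id t).sub_const s).const_mul (deriv F s))).congr_deriv (by simp)
  · exact (((hasDerivAt_id t).sub_const s).pow 2).congr_deriv (by simp)
  · filter_upwards [self_mem_nhdsWithin] with t ht using
      mul_ne_zero two_ne_zero (sub_ne_zero.2 ht)
  · have : ContinuousAt (fun t ↦ F t - F s - deriv F s * (t - s)) s := by fun_prop
    simpa using this.tendsto.mono_left nhdsWithin_le_nhds
  · have : ContinuousAt (fun t : ℝ ↦ (t - s) ^ 2) s := by fun_prop
    simpa using this.tendsto.mono_left nhdsWithin_le_nhds
  · refine ((hasDerivAt_iff_tendsto_slope.1 hF'.hasDerivAt).div_const 2).congr fun t ↦ ?_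
    rw [slope_def_field, div_div, mul_comm]

theorem integral_secantKernel (hU : IsOpen U) (hUc : U.OrdConnected) (hF : ContDiffOn ℝ 3 F U)
    (hpos : ∀ x ∈ U, 0 < deriv F x) (ha : a ∈ U) (hb : b ∈ U) (hs : s ∈ Ioo a b)
    (hint : IntervalIntegrable (secantKernel F s) volume a b) :
    ∫ t in a..b, secantKernel F s t =
      (deriv F s / (F s - F b) - 1 / (s - b)) - (deriv F s / (F s - F a) - 1 / (s - a)) := by
  have hFd : DifferentiableOn ℝ F U := hF.differentiableOn (by norm_num)
  have hab : Icc a b ⊆ U := hUc.out ha hb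
  have hsU : s ∈ U := hab (Ioo_subset_Icc_self hs)
  have hFs : HasDerivAt F (deriv F s) s := (hFd.differentiableAt (hU.mem_nhds hsU)).hasDerivAt
  have hinj : InjOn F U := (strictMonoOn_of_deriv_pos hUc.convex hFd.continuousOn
    fun x hx ↦ hpos x (interior_subset hx)).injOn
  refine intervalIntegral_eq_sub_of_hasDerivAt_of_tendsto_nhdsNE
    (f := fun t ↦ deriv F s / (F s - F t) - 1 / (s - t)) hs (fun t ht hts ↦ ?_)
    (L := deriv (deriv F) s / 2 * (deriv F s)⁻¹) ?_ hint
  · have hFst : F s - F t ≠ 0 := sub_ne_zero.2 (hinj.ne hsU (hab ht) hts.symm)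
    have hst : s - t ≠ 0 := sub_ne_zero.2 hts.symm
    refine (((hasDerivAt_const t (deriv F s)).div
      ((hFd.differentiableAt (hU.mem_nhds (hab ht))).hasDerivAt.const_sub (F s)) hFst).sub
      ((hasDerivAt_const t 1).div ((hasDerivAt_id t).const_sub s) hst)).congr_deriv ?_
    simp only [secantKernel, id_eq, ← neg_sub (F s) (F t), ← neg_sub s t]
    ring
  · have hrem := (tendsto_taylor_remainder_div_sq
      (eventually_of_mem (hU.mem_nhds hsU) fun x hx ↦ hFd.differentiableAt (hU.mem_nhds hx))
      (((hF.deriv_of_isOpen (m := 2) hU le_rfl).differentiableOn two_ne_zero).differentiableAt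
        (hU.mem_nhds hsU))).mul ((hasDerivAt_iff_tendsto_slope.1 hFs).inv₀ (hpos s hsU).ne')
    refine hrem.congr' ?_
    filter_upwards [self_mem_nhdsWithin, nhdsWithin_le_nhds (hU.mem_nhds hsU)] with t hts ht
    have hFst : F t - F s ≠ 0 := sub_ne_zero.2 (hinj.ne ht hsU hts)
    have hst : t - s ≠ 0 := sub_ne_zero.2 hts
    rw [slope_def_field, ← neg_sub (F t), ← neg_sub t]
    field_simp
    ring

theorem setIntegral_secantKernel (hU : IsOpen U) (hUc : U.OrdConnected)
    (hF : ContDiffOn ℝ 3 F U) (hpos : ∀ x ∈ U, 0 < deriv F x) (ha : a ∈ U) (hb : b ∈ U)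
    (hab : a < b) :
    ∫ p in Icc a b ×ˢ Icc a b, secantKernel F p.1 p.2 =
      Real.log (deriv F a) + Real.log (deriv F b) - 2 * Real.log (slope F a b) := by
  have hsub : Icc a b ⊆ U := hUc.out ha hb
  have hFd : DifferentiableOn ℝ F U := hF.differentiableOn (by norm_num)
  have hint := integrableOn_secantKernel hU hF hpos hsub
  have hprod : Integrable (fun p : ℝ × ℝ ↦ secantKernel F p.1 p.2)
      ((volume.restrict (Icc a b)).prod (volume.restrict (Icc a b))) := by
    rwa [Measure.prod_restrict]
  have hinner : (fun s ↦ ∫ t in Icc a b, secantKernel F s t) =ᵐ[volume.restrict (Icc a b)]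
      fun s ↦ (deriv F s / (F s - F b) - 1 / (s - b)) -
        (deriv F s / (F s - F a) - 1 / (s - a)) := by
    have hIoo : ∀ᵐ s ∂volume.restrict (Icc a b), s ∈ Ioo a b := by
      rw [← restrict_Ioo_eq_restrict_Icc]
      exact ae_restrict_mem measurableSet_Ioo
    filter_upwards [hIoo, hprod.prod_right_ae] with s hs hsint
    rw [integral_Icc_eq_integral_Ioc, ← intervalIntegral.integral_of_le hab.le]
    exact integral_secantKernel hU hUc hF hpos ha hb hs
      ((intervalIntegrable_iff_integrableOn_Icc_of_le hab.le).2 hsint)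
  rw [Measure.volume_eq_prod, setIntegral_prod _ hint, integral_congr_ae hinner,
    integral_Icc_eq_integral_Ioc, ← intervalIntegral.integral_of_le hab.le,
    intervalIntegral.integral_eq_sub_of_hasDerivAt_of_le
      (f := fun s ↦ Real.log (dslope F b s) - Real.log (dslope F a s)) hab.le
      (((continuousOn_log_dslope hU hUc hFd hpos hb).sub
        (continuousOn_log_dslope hU hUc hFd hpos ha)).mono hsub)
      (fun s hs ↦ ?_)
      ((intervalIntegrable_iff_integrableOn_Icc_of_le hab.le).2
        (hprod.integral_prod_left.congr hinner))]
  · rw [dslope_same, dslope_same, dslope_of_ne _ hab.ne, dslope_of_ne _ hab.ne', slope_comm F b a]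
    ring
  · have hsU := hsub (Ioo_subset_Icc_self hs)
    exact (hasDerivAt_log_dslope hU hUc hFd hpos hsU hb hs.2.ne).sub
      (hasDerivAt_log_dslope hU hUc hFd hpos hsU ha hs.1.ne')

end SecantKernel
section Circle

open Set Filter Topology Real

/-- Position at time `x ∈ (0, 1)` of the stereographic projection, onto a line, of the point running
with unit speed through the round circle of length `1`. -/
def circleLine (x : ℝ) : ℝ := -(π * cot (π * x))

/-- The speed of `circleLine`. The chord of the round circle of length `1` over an arc of length `x`
has length `sin (π x) / π`, so that this is also the inverse square of that chord. -/
def circleSpeed (x : ℝ) : ℝ := (π / sin (π * x)) ^ 2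

/-- The density of the Möbius energy of the round circle of length `1`, with the chord term written
as `circleSpeed (s - t)`. -/
def circleDensity (s t : ℝ) : ℝ := circleSpeed (s - t) - 1 / arcd s t ^ 2

variable {s t x y : ℝ}

theorem circleLine_eq : circleLine = fun x ↦ -(π * (cos (π * x) / sin (π * x))) :=
  funext fun x ↦ by rw [circleLine, cot_eq_cos_div_sin]

theorem sin_pi_mul_pos (hx : x ∈ Ioo (0 : ℝ) 1) : 0 < sin (π * x) :=
  sin_pos_of_pos_of_lt_pi (mul_pos pi_pos hx.1) (mul_lt_of_lt_one_right pi_pos hx.2)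

theorem circleSpeed_pos (hx : x ∈ Ioo (0 : ℝ) 1) : 0 < circleSpeed x := by
  have := sin_pi_mul_pos hx
  unfold circleSpeed
  positivity

theorem hasDerivAt_circleLine (hx : sin (π * x) ≠ 0) :
    HasDerivAt circleLine (circleSpeed x) x := by
  have hmul : HasDerivAt (fun x ↦ π * x) π x := by simpa using (hasDerivAt_id x).const_mul π
  have hquot := ((hmul.cos.div hmul.sin hx).const_mul π).neg
  rw [circleLine_eq]
  refine hquot.congr_deriv ?_
  rw [circleSpeed]
  field_simp
  linear_combination sin_sq_add_cos_sq (π * x)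

theorem contDiffOn_circleLine {n : WithTop ℕ∞} : ContDiffOn ℝ n circleLine (Ioo 0 1) := by
  rw [circleLine_eq]
  exact (contDiffOn_const.mul ((by fun_prop : ContDiff ℝ n fun x ↦ cos (π * x)).contDiffOn.div
    (by fun_prop) fun x hx ↦ (sin_pi_mul_pos hx).ne')).neg

theorem circleLine_sub_circleLine (hs : sin (π * s) ≠ 0) (ht : sin (π * t) ≠ 0) :
    circleLine t - circleLine s = π * sin (π * (t - s)) / (sin (π * s) * sin (π * t)) := by
  simp only [circleLine_eq, mul_sub, sin_sub]
  field_simp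
  ring

theorem circleSpeed_sub_comm (s t : ℝ) : circleSpeed (s - t) = circleSpeed (t - s) := by
  unfold circleSpeed
  rw [← neg_sub t s, mul_neg, sin_neg, div_neg, neg_sq]

theorem secantKernel_circleLine (hs : sin (π * s) ≠ 0) (ht : sin (π * t) ≠ 0) :
    secantKernel circleLine s t = circleSpeed (s - t) - 1 / (t - s) ^ 2 := by
  rw [secantKernel, (hasDerivAt_circleLine hs).deriv, (hasDerivAt_circleLine ht).deriv,
    circleLine_sub_circleLine hs ht, circleSpeed_sub_comm]
  congr 1
  simp only [circleSpeed]
  field_simp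

theorem cot_le_inv (hy : 0 < y) (hy' : y ≤ π / 2) : cot y ≤ y⁻¹ := by
  obtain rfl | hlt := hy'.eq_or_lt
  · rw [cot_eq_cos_div_sin, cos_pi_div_two, zero_div]; positivity
  · rw [← tan_inv_eq_cot]
    exact inv_anti₀ hy (lt_tan hy hlt).le

theorem cot_nonneg (hy : 0 < y) (hy' : y ≤ π / 2) : 0 ≤ cot y := by
  rw [cot_eq_cos_div_sin]
  exact div_nonneg (cos_nonneg_of_neg_pi_div_two_le_of_le (by linarith [pi_pos]) hy')
    (sin_nonneg_of_nonneg_of_le_pi hy.le (by linarith [pi_pos]))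

theorem inv_sub_cot_le (hy : 0 < y) (hy' : y ≤ π / 2) : y⁻¹ - cot y ≤ π * y / 4 := by
  have hjordan : 2 / π * y ≤ sin y := mul_le_sin hy.le hy'
  have hsin : 0 < sin y := (by positivity : 0 < 2 / π * y).trans_le hjordan
  calc y⁻¹ - cot y ≤ (sin y)⁻¹ - cot y :=
        sub_le_sub_right (inv_anti₀ hsin (sin_le hy.le)) _
    _ = (1 - cos y) / sin y := by rw [cot_eq_cos_div_sin, inv_eq_one_div, sub_div]
    _ ≤ (y ^ 2 / 2) / (2 / π * y) := by
        gcongr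
        linarith [one_sub_sq_div_two_le_cos (x := y)]
    _ = π * y / 4 := by field_simp; norm_num

theorem circleSpeed_sub_inv_sq_mem_Icc (hx : x ∈ Icc (0 : ℝ) (1 / 2)) :
    circleSpeed x - 1 / x ^ 2 ∈ Icc 0 (π ^ 2) := by
  obtain rfl | hx0 := hx.1.eq_or_lt
  · simpa [circleSpeed] using sq_nonneg π
  have hy : 0 < π * x := by positivity
  have hy' : π * x ≤ π / 2 := by nlinarith [pi_pos, hx.2]
  have hsin : 0 < sin (π * x) := sin_pi_mul_pos ⟨hx0, by linarith [hx.2]⟩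
  have hinv : 1 / x ^ 2 = (π / (π * x)) ^ 2 := by field_simp
  refine ⟨sub_nonneg.2 ?_, sub_le_iff_le_add.2 ?_⟩
  · rw [hinv, circleSpeed]
    gcongr
    exact sin_le hy.le
  · have hcot : cot (π * x) ^ 2 ≤ ((π * x)⁻¹) ^ 2 :=
      pow_le_pow_left₀ (cot_nonneg hy hy') (cot_le_inv hy hy') 2
    calc circleSpeed x = π ^ 2 + π ^ 2 * cot (π * x) ^ 2 := by
          rw [circleSpeed, cot_eq_cos_div_sin]
          field_simp
          linear_combination -sin_sq_add_cos_sq (π * x)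
      _ ≤ π ^ 2 + π ^ 2 * ((π * x)⁻¹) ^ 2 := by gcongr
      _ = π ^ 2 + 1 / x ^ 2 := by rw [hinv]; field_simp

theorem tendsto_circleLine_add_inv :
    Tendsto (fun x ↦ circleLine x + x⁻¹) (𝓝[>] 0) (𝓝 0) := by
  have hupper : Tendsto (fun x : ℝ ↦ π * (π * (π * x) / 4)) (𝓝[>] 0) (𝓝 0) :=
    tendsto_nhdsWithin_of_tendsto_nhds (Continuous.tendsto' (by fun_prop) _ _ (by simp))
  have hbounds : ∀ᶠ x in 𝓝[>] (0 : ℝ), 0 ≤ circleLine x + x⁻¹ ∧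
      circleLine x + x⁻¹ ≤ π * (π * (π * x) / 4) := by
    filter_upwards [Ioo_mem_nhdsGT (show (0 : ℝ) < 1 / 2 by norm_num)] with x hx
    have hx0 : 0 < x := hx.1
    have hy : 0 < π * x := by positivity
    have hy' : π * x ≤ π / 2 := by nlinarith [pi_pos, hx.2]
    have heq : circleLine x + x⁻¹ = π * ((π * x)⁻¹ - cot (π * x)) := by
      unfold circleLine; field_simp; ring
    rw [heq]
    exact ⟨mul_nonneg pi_pos.le (sub_nonneg.2 (cot_le_inv hy hy')),
      mul_le_mul_of_nonneg_left (inv_sub_cot_le hy hy') pi_pos.le⟩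
  exact squeeze_zero' (hbounds.mono fun _ h ↦ h.1) (hbounds.mono fun _ h ↦ h.2) hupper

theorem integral_circleSpeed_sub_inv_sq :
    ∫ x in (0 : ℝ)..(1 / 2), (circleSpeed x - 1 / x ^ 2) = 2 := by
  have hmeas : Measurable fun x ↦ circleSpeed x - 1 / x ^ 2 := by unfold circleSpeed; fun_prop
  have hint : IntervalIntegrable (fun x ↦ circleSpeed x - 1 / x ^ 2) volume 0 (1 / 2) := by
    rw [intervalIntegrable_iff_integrableOn_Icc_of_le (by norm_num)]
    exact .of_mem_Icc 0 (π ^ 2) hmeas.aemeasurable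
      (ae_restrict_of_forall_mem measurableSet_Icc fun _ ↦ circleSpeed_sub_inv_sq_mem_Icc)
  have hderiv : ∀ x ∈ Ioo (0 : ℝ) (1 / 2),
      HasDerivAt (fun x ↦ circleLine x + x⁻¹) (circleSpeed x - 1 / x ^ 2) x := fun x hx ↦
    ((hasDerivAt_circleLine (sin_pi_mul_pos ⟨hx.1, by linarith [hx.2]⟩).ne').add
      (hasDerivAt_inv hx.1.ne')).congr_deriv (by ring)
  have hhalf : Tendsto (fun x ↦ circleLine x + x⁻¹) (𝓝[<] (1 / 2)) (𝓝 2) := by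
    have hcont : ContinuousAt (fun x ↦ circleLine x + x⁻¹) (1 / 2) :=
      (hasDerivAt_circleLine (sin_pi_mul_pos (by norm_num)).ne').continuousAt.add
        (continuousAt_inv₀ (by norm_num))
    have hval : circleLine (1 / 2) + (1 / 2 : ℝ)⁻¹ = 2 := by
      simp [circleLine_eq, ← div_eq_mul_inv]
    simpa only [hval] using hcont.tendsto.mono_left nhdsWithin_le_nhds
  rw [intervalIntegral.integral_eq_sub_of_hasDerivAt_of_tendsto (by norm_num) hderiv hint
    tendsto_circleLine_add_inv hhalf, sub_zero]

theorem arcd_comm (s t : ℝ) : arcd s t = arcd t s := by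
  simp only [arcd, abs_sub_comm]

theorem arcd_pos (hne : s ≠ t) (hlt : |s - t| < 1) : 0 < arcd s t :=
  lt_min (abs_pos.2 (sub_ne_zero.2 hne)) (sub_pos.2 hlt)

theorem arcd_mem_Icc (hs : s ∈ Icc (0 : ℝ) 1) (ht : t ∈ Icc (0 : ℝ) 1) :
    arcd s t ∈ Icc (0 : ℝ) (1 / 2) := by
  have hst : |s - t| ≤ 1 := abs_le.2 ⟨by linarith [hs.1, ht.2], by linarith [hs.2, ht.1]⟩
  refine ⟨le_min (abs_nonneg _) (sub_nonneg.2 hst), ?_⟩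
  rcases le_total |s - t| (1 / 2) with h | h
  · exact (min_le_left _ _).trans h
  · exact (min_le_right _ _).trans (by linarith)

theorem continuous_arcd : Continuous fun p : ℝ × ℝ ↦ arcd p.1 p.2 := by
  unfold arcd; fun_prop

theorem arcd_eq_norm_coe (hs : s ∈ Icc (0 : ℝ) 1) (ht : t ∈ Icc (0 : ℝ) 1) :
    arcd s t = ‖((s - t : ℝ) : UnitAddCircle)‖ := by
  wlog hst : t ≤ s generalizing s t
  · rw [arcd_comm, this ht hs (le_of_not_ge hst), ← norm_neg, ← AddCircle.coe_neg, neg_sub]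
  rw [UnitAddCircle.norm_eq, abs_sub_round_eq_min, arcd, abs_of_nonneg (sub_nonneg.2 hst)]
  obtain h | h := (show s - t ≤ 1 by linarith [hs.2, ht.1]).eq_or_lt
  · simp [h]
  · rw [Int.fract_eq_self.2 ⟨sub_nonneg.2 hst, h⟩]

theorem circleSpeed_arcd (s t : ℝ) : circleSpeed (arcd s t) = circleSpeed (s - t) := by
  have habs : circleSpeed |s - t| = circleSpeed (s - t) := by
    rcases abs_choice (s - t) with h | h
    · rw [h]
    · rw [h, neg_sub, circleSpeed_sub_comm]
  rcases min_choice |s - t| (1 - |s - t|) with h | h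
  · rw [arcd, h, habs]
  · rw [arcd, h, ← habs, circleSpeed, mul_sub, mul_one, sin_pi_sub, circleSpeed]

theorem circleDensity_eq (s t : ℝ) :
    circleDensity s t = circleSpeed (arcd s t) - 1 / arcd s t ^ 2 := by
  rw [circleDensity, circleSpeed_arcd]

theorem circleDensity_mem_Icc (hs : s ∈ Icc (0 : ℝ) 1) (ht : t ∈ Icc (0 : ℝ) 1) :
    circleDensity s t ∈ Icc 0 (π ^ 2) :=
  circleDensity_eq s t ▸ circleSpeed_sub_inv_sq_mem_Icc (arcd_mem_Icc hs ht)

theorem integral_comp_arcd (g : ℝ → ℝ) (hs : s ∈ Icc (0 : ℝ) 1) :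
    ∫ t in (0 : ℝ)..1, g (arcd s t) = 2 * ∫ x in (0 : ℝ)..(1 / 2), g x := by
  have hcircle : ∫ t in (0 : ℝ)..1, g (arcd s t) = ∫ x in (-(1 / 2) : ℝ)..(1 / 2), g |x| := by
    calc ∫ t in (0 : ℝ)..1, g (arcd s t)
        = ∫ t in (0 : ℝ)..(0 + 1), g ‖(s : UnitAddCircle) - (t : UnitAddCircle)‖ := by
          rw [zero_add]
          refine intervalIntegral.integral_congr fun t ht ↦ ?_
          rw [uIcc_of_le zero_le_one] at ht
          simp only [arcd_eq_norm_coe hs ht, AddCircle.coe_sub]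
      _ = ∫ b : UnitAddCircle, g ‖b‖ := by
          rw [UnitAddCircle.intervalIntegral_preimage 0 fun b ↦ g ‖(s : UnitAddCircle) - b‖,
            integral_sub_left_eq_self fun b : UnitAddCircle ↦ g ‖b‖]
      _ = ∫ x in (-(1 / 2) : ℝ)..(-(1 / 2) + 1), g ‖(x : UnitAddCircle)‖ :=
          (UnitAddCircle.intervalIntegral_preimage _ fun b ↦ g ‖b‖).symm
      _ = ∫ x in (-(1 / 2) : ℝ)..(1 / 2), g |x| := by
          norm_num
          refine intervalIntegral.integral_congr fun x hx ↦ ?_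
          rw [uIcc_of_le (by norm_num)] at hx
          have : |x| ≤ |(1 : ℝ)| / 2 := by rw [abs_one]; exact abs_le.2 ⟨by linarith [hx.1], hx.2⟩
          simp only [(AddCircle.norm_coe_eq_abs_iff 1 one_ne_zero).2 this]
  have heven := integral_comp_abs (f := (Iic (1 / 2)).indicator g)
  have habs : (fun x : ℝ ↦ (Iic (1 / 2)).indicator g |x|) =
      (Icc (-(1 / 2)) (1 / 2)).indicator fun x ↦ g |x| := by
    ext x
    simp only [indicator_apply, mem_Iic, mem_Icc, abs_le]
  rw [habs, integral_indicator measurableSet_Icc, setIntegral_indicator measurableSet_Iic,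
    Ioi_inter_Iic, integral_Icc_eq_integral_Ioc,
    ← intervalIntegral.integral_of_le (by norm_num),
    ← intervalIntegral.integral_of_le (by norm_num)] at heven
  rw [hcircle, heven]

theorem integrableOn_circleDensity :
    IntegrableOn (fun p : ℝ × ℝ ↦ circleDensity p.1 p.2) (Icc 0 1 ×ˢ Icc 0 1) := by
  have hmeas : Measurable fun p : ℝ × ℝ ↦ circleDensity p.1 p.2 := by
    have := continuous_arcd.measurable
    unfold circleDensity circleSpeed
    fun_prop
  refine Measure.integrableOn_of_bounded (M := π ^ 2)
    (isCompact_Icc.prod isCompact_Icc).measure_lt_top.ne hmeas.aestronglyMeasurable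
    (ae_restrict_of_forall_mem (measurableSet_Icc.prod measurableSet_Icc) fun p hp ↦ ?_)
  have hmem := circleDensity_mem_Icc hp.1 hp.2
  rw [norm_of_nonneg hmem.1]
  exact hmem.2

theorem setIntegral_circleDensity :
    ∫ p in Icc (0 : ℝ) 1 ×ˢ Icc (0 : ℝ) 1, circleDensity p.1 p.2 = 4 := by
  have hinner : ∀ s ∈ Icc (0 : ℝ) 1, ∫ t in Icc (0 : ℝ) 1, circleDensity s t = 4 := by
    intro s hs
    simp only [circleDensity_eq]
    rw [integral_Icc_eq_integral_Ioc, ← intervalIntegral.integral_of_le zero_le_one,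
      integral_comp_arcd (fun x ↦ circleSpeed x - 1 / x ^ 2) hs, integral_circleSpeed_sub_inv_sq]
    norm_num
  rw [Measure.volume_eq_prod, setIntegral_prod _ integrableOn_circleDensity,
    setIntegral_congr_fun measurableSet_Icc hinner]
  simp

end Circle

section Knot

open Set
open scoped NNReal

variable {V : Type*} [NormedAddCommGroup V]

/-- The density of the Möbius energy of a closed knot `γ` parametrized by arc length. Both terms are
`0` on the diagonal. -/
def knotDensity (γ : ℝ → V) (s t : ℝ) : ℝ := 1 / ‖γ s - γ t‖ ^ 2 - 1 / arcd s t ^ 2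

variable [NormedSpace ℝ V]

theorem periodic_deriv {f : ℝ → V} {c : ℝ} (hf : Function.Periodic f c) :
    Function.Periodic (deriv f) c := fun x ↦ by
  rw [← deriv_comp_add_const, funext hf]

theorem exists_lipschitzWith_of_contDiff_of_periodic {f : ℝ → V} {c : ℝ} (hf : ContDiff ℝ 1 f)
    (hper : Function.Periodic f c) (hc : 0 < c) : ∃ K, LipschitzWith K f := by
  obtain ⟨C, hC⟩ := (isCompact_Icc (a := 0) (b := c)).exists_bound_of_continuousOn
    (hf.continuous_deriv le_rfl).continuousOn
  refine ⟨C.toNNReal, lipschitzWith_of_nnnorm_deriv_le (hf.differentiable one_ne_zero) fun x ↦ ?_⟩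
  obtain ⟨y, hy, hxy⟩ := (periodic_deriv hper).exists_mem_Ico₀ hc x
  rw [hxy]
  exact NNReal.le_toNNReal_of_coe_le (hC y ⟨hy.1, hy.2.le⟩)

/-- A simple closed `C²` curve of length `1`, parametrized by arc length and viewed as a
`1`-periodic function on `ℝ`. -/
structure IsArcLengthKnot (γ : ℝ → V) : Prop where
  contDiff : ContDiff ℝ 2 γ
  periodic : Function.Periodic γ 1
  exists_int_of_eq : ∀ s t : ℝ, γ s = γ t → ∃ n : ℤ, s - t = n
  norm_deriv : ∀ s, ‖deriv γ s‖ = 1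

namespace IsArcLengthKnot

variable {γ : ℝ → V} {s t u : ℝ}

theorem differentiable (hγ : IsArcLengthKnot γ) : Differentiable ℝ γ :=
  hγ.contDiff.differentiable two_ne_zero

theorem ne_of_arcd_pos (hγ : IsArcLengthKnot γ) (h : 0 < arcd s t) : γ s ≠ γ t := by
  intro heq
  obtain ⟨n, hn⟩ := hγ.exists_int_of_eq s t heq
  obtain ⟨hpos, hlt⟩ := lt_min_iff.1 h
  rw [sub_pos] at hlt
  rw [hn, ← Int.cast_abs] at hpos hlt
  have : 0 < |n| := by exact_mod_cast hpos
  have : |n| < 1 := by exact_mod_cast hlt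
  lia

theorem injOn_Ico (hγ : IsArcLengthKnot γ) : InjOn γ (Ico 0 1) := by
  intro s hs t ht heq
  by_contra hne
  exact hγ.ne_of_arcd_pos (arcd_pos hne (abs_lt.2
    ⟨by linarith [hs.1, ht.2], by linarith [hs.2, ht.1]⟩)) heq

theorem apply_ne_apply_zero (hγ : IsArcLengthKnot γ) (hu : u ∈ Ioo (0 : ℝ) 1) : γ u ≠ γ 0 :=
  hγ.injOn_Ico.ne ⟨hu.1.le, hu.2⟩ (left_mem_Ico.2 one_pos) hu.1.ne'

theorem exists_eq_and_abs_sub_eq_arcd (hγ : IsArcLengthKnot γ) (hs : s ∈ Icc (0 : ℝ) 1)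
    (ht : t ∈ Icc (0 : ℝ) 1) : ∃ t', γ t' = γ t ∧ |s - t'| = arcd s t := by
  rcases le_total |s - t| (1 - |s - t|) with h | h
  · exact ⟨t, rfl, (min_eq_left h).symm⟩
  rw [arcd, min_eq_right h]
  rcases le_total s t with hst | hts
  · refine ⟨t - 1, hγ.periodic.sub_eq t, ?_⟩
    rw [abs_of_nonneg (by linarith [hs.1, ht.2]), abs_of_nonpos (sub_nonpos.2 hst)]
    ring
  · refine ⟨t + 1, hγ.periodic t, ?_⟩
    rw [abs_of_nonpos (by linarith [hs.2, ht.1]), abs_of_nonneg (sub_nonneg.2 hts)]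
    ring

theorem norm_sub_le_arcd (hγ : IsArcLengthKnot γ) (hs : s ∈ Icc (0 : ℝ) 1)
    (ht : t ∈ Icc (0 : ℝ) 1) : ‖γ s - γ t‖ ≤ arcd s t := by
  have hlip : LipschitzWith 1 γ := lipschitzWith_of_nnnorm_deriv_le hγ.differentiable
    fun u ↦ NNReal.coe_le_coe.1 (hγ.norm_deriv u).le
  obtain ⟨t', heq, hdist⟩ := hγ.exists_eq_and_abs_sub_eq_arcd hs ht
  simpa [heq, hdist] using hlip.norm_sub_le s t'

theorem knotDensity_nonneg (hγ : IsArcLengthKnot γ) (hs : s ∈ Icc (0 : ℝ) 1)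
    (ht : t ∈ Icc (0 : ℝ) 1) : 0 ≤ knotDensity γ s t := by
  obtain h | h := (arcd_mem_Icc hs ht).1.eq_or_lt
  · simp [knotDensity, ← h]
  have hpos : 0 < ‖γ s - γ t‖ := norm_pos_iff.2 (sub_ne_zero.2 (hγ.ne_of_arcd_pos h))
  exact sub_nonneg.2 (one_div_le_one_div_of_le (by positivity)
    (pow_le_pow_left₀ hpos.le (hγ.norm_sub_le_arcd hs ht) 2))

theorem exists_knotDensity_le_of_le_arcd (hγ : IsArcLengthKnot γ) (K : ℝ≥0) :
    ∃ C, ∀ s ∈ Icc (0 : ℝ) 1, ∀ t ∈ Icc (0 : ℝ) 1, 1 ≤ K * arcd s t → knotDensity γ s t ≤ C := by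
  set far : Set (ℝ × ℝ) := (Icc 0 1 ×ˢ Icc 0 1) ∩ {p | 1 ≤ K * arcd p.1 p.2}
  have hcompact : IsCompact far := (isCompact_Icc.prod isCompact_Icc).inter_right
    (isClosed_le continuous_const (continuous_const.mul continuous_arcd))
  have harcd : ∀ p ∈ far, 0 < arcd p.1 p.2 := fun p hp ↦
    pos_of_mul_pos_right (one_pos.trans_le hp.2) K.2
  have hcont : ContinuousOn (fun p : ℝ × ℝ ↦ knotDensity γ p.1 p.2) far := by
    have := hγ.contDiff.continuous
    refine .sub (.div (by fun_prop) (by fun_prop) fun p hp ↦ ?_)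
      (.div (by fun_prop) (continuous_arcd.pow 2).continuousOn fun p hp ↦ ?_)
    · exact pow_ne_zero 2 (norm_ne_zero_iff.2 (sub_ne_zero.2 (hγ.ne_of_arcd_pos (harcd p hp))))
    · exact pow_ne_zero 2 (harcd p hp).ne'
  obtain ⟨C, hC⟩ := hcompact.exists_bound_of_continuousOn hcont
  exact ⟨C, fun s hs t ht h ↦ (le_abs_self _).trans (hC (s, t) ⟨⟨hs, ht⟩, h⟩)⟩

end IsArcLengthKnot

end Knot

section ChordLowerBound

open Set
open scoped NNReal

variable {V : Type*} [NormedAddCommGroup V] [InnerProductSpace ℝ V]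

theorem mul_one_sub_le_norm_sub {γ : ℝ → V} {K : ℝ≥0} (hγ : Differentiable ℝ γ)
    (hunit : ∀ s, ‖deriv γ s‖ = 1) (hK : LipschitzWith K (deriv γ)) (s t : ℝ) :
    |s - t| * (1 - (K * |s - t|) ^ 2 / 2) ≤ ‖γ s - γ t‖ := by
  wlog hst : s < t generalizing s t
  · obtain rfl | hts := (not_lt.1 hst).eq_or_lt
    · simp
    · rw [abs_sub_comm, norm_sub_rev]
      exact this t s hts
  have hderiv : ∀ u, HasDerivAt (fun u ↦ inner ℝ (deriv γ s) (γ u))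
      (inner ℝ (deriv γ s) (deriv γ u)) u := fun u ↦ by
    simpa using (hasDerivAt_const u (deriv γ s)).inner ℝ (hγ u).hasDerivAt
  obtain ⟨ξ, hξ, hslope⟩ := exists_hasDerivAt_eq_slope _ _ hst
    (fun u _ ↦ (hderiv u).continuousAt.continuousWithinAt) fun u _ ↦ hderiv u
  have hturn : ‖deriv γ s - deriv γ ξ‖ ≤ K * |s - t| := by
    have hle : |s - ξ| ≤ |s - t| := by
      rw [abs_sub_comm s ξ, abs_sub_comm s t, abs_of_pos (sub_pos.2 hξ.1),
        abs_of_pos (sub_pos.2 hst)]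
      exact sub_le_sub_right hξ.2.le s
    exact (hK.norm_sub_le s ξ).trans (mul_le_mul_of_nonneg_left hle K.2)
  calc |s - t| * (1 - (K * |s - t|) ^ 2 / 2)
      ≤ |s - t| * (1 - ‖deriv γ s - deriv γ ξ‖ ^ 2 / 2) := by gcongr
    _ = (t - s) * inner ℝ (deriv γ s) (deriv γ ξ) := by
        rw [abs_sub_comm, abs_of_pos (sub_pos.2 hst), norm_sub_sq_real, hunit, hunit]
        ring
    _ = inner ℝ (deriv γ s) (γ t - γ s) := by
        rw [hslope, inner_sub_right, mul_div_cancel₀ _ (sub_pos.2 hst).ne']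
    _ ≤ ‖γ s - γ t‖ := by
        simpa [hunit, norm_sub_rev] using real_inner_le_norm (deriv γ s) (γ t - γ s)

theorem one_div_sq_sub_one_div_sq_le {x y k : ℝ} (hx : 0 < x) (hk : 0 ≤ k) (hkx : k * x ≤ 1)
    (h : x * (1 - (k * x) ^ 2 / 2) ≤ y) : 1 / y ^ 2 - 1 / x ^ 2 ≤ 4 * k ^ 2 := by
  have hw : 0 ≤ (k * x) ^ 2 := sq_nonneg _
  have hsq : (k * x) ^ 2 ≤ 1 := pow_le_one₀ (by positivity) hkx
  have hlow : 0 < x * (1 - (k * x) ^ 2 / 2) := mul_pos hx (by linarith)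
  have hinv : 1 ≤ (1 + 4 * (k * x) ^ 2) * (1 - (k * x) ^ 2 / 2) ^ 2 := by
    generalize (k * x) ^ 2 = w at hsq hw
    nlinarith [mul_nonneg hw (mul_nonneg (sub_nonneg.2 hsq) (by linarith : 0 ≤ 11 / 4 - w))]
  calc 1 / y ^ 2 - 1 / x ^ 2
      ≤ 1 / (x * (1 - (k * x) ^ 2 / 2)) ^ 2 - 1 / x ^ 2 := by gcongr
    _ ≤ (1 + 4 * (k * x) ^ 2) / x ^ 2 - 1 / x ^ 2 := by
        refine sub_le_sub_right ?_ _
        rw [div_le_div_iff₀ (by positivity) (by positivity), mul_pow x]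
        nlinarith [mul_le_mul_of_nonneg_left hinv (sq_nonneg x)]
    _ = 4 * k ^ 2 := by field_simp; ring

namespace IsArcLengthKnot

variable {γ : ℝ → V}

theorem exists_arcd_mul_le_norm_sub (hγ : IsArcLengthKnot γ) :
    ∃ K : ℝ≥0, ∀ s ∈ Icc (0 : ℝ) 1, ∀ t ∈ Icc (0 : ℝ) 1,
      arcd s t * (1 - (K * arcd s t) ^ 2 / 2) ≤ ‖γ s - γ t‖ := by
  obtain ⟨K, hK⟩ := exists_lipschitzWith_of_contDiff_of_periodic
    (contDiff_succ_iff_deriv.1 (show ContDiff ℝ (1 + 1) γ by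
      simpa only [one_add_one_eq_two] using hγ.contDiff)).2.2
    (periodic_deriv hγ.periodic) one_pos
  refine ⟨K, fun s hs t ht ↦ ?_⟩
  obtain ⟨t', heq, hdist⟩ := hγ.exists_eq_and_abs_sub_eq_arcd hs ht
  simpa only [heq, hdist] using
    mul_one_sub_le_norm_sub hγ.differentiable hγ.norm_deriv hK s t'

theorem exists_knotDensity_le (hγ : IsArcLengthKnot γ) :
    ∃ C, ∀ s ∈ Icc (0 : ℝ) 1, ∀ t ∈ Icc (0 : ℝ) 1, knotDensity γ s t ≤ C := by
  obtain ⟨K, hK⟩ := hγ.exists_arcd_mul_le_norm_sub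
  obtain ⟨C, hC⟩ := hγ.exists_knotDensity_le_of_le_arcd K
  refine ⟨max C (4 * K ^ 2), fun s hs t ht ↦ ?_⟩
  rcases le_total 1 (K * arcd s t) with hfar | hnear
  · exact le_max_of_le_left (hC s hs t ht hfar)
  refine le_max_of_le_right ?_
  obtain h | h := (arcd_mem_Icc hs ht).1.eq_or_lt
  · have hzero : ‖γ s - γ t‖ = 0 :=
      le_antisymm (h ▸ hγ.norm_sub_le_arcd hs ht) (norm_nonneg _)
    simp [knotDensity, ← h, hzero]
  · exact one_div_sq_sub_one_div_sq_le h K.2 hnear (hK s hs t ht)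

theorem integrableOn_knotDensity (hγ : IsArcLengthKnot γ) :
    IntegrableOn (fun p : ℝ × ℝ ↦ knotDensity γ p.1 p.2) (Icc 0 1 ×ˢ Icc 0 1) := by
  obtain ⟨C, hC⟩ := hγ.exists_knotDensity_le
  have hmeas : Measurable fun p : ℝ × ℝ ↦ knotDensity γ p.1 p.2 := by
    have hnorm : Continuous fun p : ℝ × ℝ ↦ ‖γ p.1 - γ p.2‖ := by
      have := hγ.contDiff.continuous
      fun_prop
    have := hnorm.measurable
    have := continuous_arcd.measurable
    unfold knotDensity
    fun_prop
  refine Measure.integrableOn_of_bounded (M := C)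
    (isCompact_Icc.prod isCompact_Icc).measure_lt_top.ne hmeas.aestronglyMeasurable
    (ae_restrict_of_forall_mem (measurableSet_Icc.prod measurableSet_Icc) fun p hp ↦ ?_)
  rw [Real.norm_of_nonneg (hγ.knotDensity_nonneg hp.1 hp.2)]
  exact hC p.1 hp.1 p.2 hp.2

end IsArcLengthKnot

end ChordLowerBound

section LongKnot

open Set

variable {V : Type*} [NormedAddCommGroup V] [NormedSpace ℝ V]

/-- The density of the Möbius energy of an open curve `η` in an arbitrary parametrization: the
lengths are measured along `η`, and the speeds turn `ds dt` into the arc-length measure. -/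
def longKnotDensity (η : ℝ → V) (s t : ℝ) : ℝ :=
  (1 / ‖η s - η t‖ ^ 2 - 1 / |∫ u in s..t, ‖deriv η u‖| ^ 2) * (‖deriv η s‖ * ‖deriv η t‖)

theorem norm_sub_le_abs_integral_norm_deriv {η : ℝ → V} {U : Set ℝ} {s t : ℝ} (hU : IsOpen U)
    (hUc : U.OrdConnected) (hη : ContDiffOn ℝ 1 η U) (hs : s ∈ U) (ht : t ∈ U) :
    ‖η s - η t‖ ≤ |∫ u in s..t, ‖deriv η u‖| := by
  wlog hst : s ≤ t generalizing s t
  · rw [norm_sub_rev, intervalIntegral.integral_symm, abs_neg]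
    exact this ht hs (le_of_not_ge hst)
  have hsub : Icc s t ⊆ U := hUc.out hs ht
  have hint : IntervalIntegrable (fun u ↦ ‖deriv η u‖) volume s t :=
    ((hη.continuousOn_deriv_of_isOpen hU le_rfl).norm.mono
      (hUc.uIcc_subset hs ht)).intervalIntegrable
  rw [norm_sub_rev]
  exact (norm_sub_le_integral_of_norm_deriv_le_of_le hst (hη.continuousOn.mono hsub)
    ((hη.differentiableOn one_ne_zero).mono (Ioo_subset_Icc_self.trans hsub))
    (.of_forall fun _ _ ↦ le_rfl) hint).trans (le_abs_self _)

theorem longKnotDensity_nonneg {η : ℝ → V} {U : Set ℝ} {s t : ℝ} (hU : IsOpen U)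
    (hUc : U.OrdConnected) (hη : ContDiffOn ℝ 1 η U) (hinj : InjOn η U) (hs : s ∈ U)
    (ht : t ∈ U) : 0 ≤ longKnotDensity η s t := by
  obtain rfl | hne := eq_or_ne s t
  · simp [longKnotDensity]
  have hpos : 0 < ‖η s - η t‖ := norm_pos_iff.2 (sub_ne_zero.2 (hinj.ne hs ht hne))
  refine mul_nonneg (sub_nonneg.2 ?_) (by positivity)
  gcongr
  exact norm_sub_le_abs_integral_norm_deriv hU hUc hη hs ht

end LongKnot

section Inversion

open Set EuclideanGeometry

variable {V : Type*} [NormedAddCommGroup V]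

/-- The speed of the inverse of the arc-length parametrized curve `γ` in the sphere of center `γ 0`
and radius `r`. -/
def inversionSpeed (γ : ℝ → V) (r u : ℝ) : ℝ := r ^ 2 / ‖γ u - γ 0‖ ^ 2

/-- The signed arc length of the inverted curve, measured from the parameter `1 / 2`: it plays for
`γ` the role that `circleLine` plays for the round circle. -/
def inversionLength (γ : ℝ → V) (r u : ℝ) : ℝ := ∫ x in (1 / 2)..u, inversionSpeed γ r x

namespace IsArcLengthKnot

variable {γ : ℝ → V} {r s t u : ℝ}

theorem inversionSpeed_pos [NormedSpace ℝ V] (hγ : IsArcLengthKnot γ) (hr : r ≠ 0)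
    (hu : u ∈ Ioo (0 : ℝ) 1) : 0 < inversionSpeed γ r u := by
  have : 0 < ‖γ u - γ 0‖ := norm_pos_iff.2 (sub_ne_zero.2 (hγ.apply_ne_apply_zero hu))
  unfold inversionSpeed
  positivity

variable [InnerProductSpace ℝ V]

theorem norm_deriv_inversion_comp (hγ : IsArcLengthKnot γ) (r : ℝ) (hu : u ∈ Ioo (0 : ℝ) 1) :
    ‖deriv (inversion (γ 0) r ∘ γ) u‖ = inversionSpeed γ r u := by
  rw [((hasFDerivAt_inversion (hγ.apply_ne_apply_zero hu)).comp_hasDerivAt u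
    (hγ.differentiable u).hasDerivAt).deriv]
  simp [inversionSpeed, norm_smul, hγ.norm_deriv, dist_eq_norm, div_pow]

theorem contDiffOn_inversion_comp (hγ : IsArcLengthKnot γ) (r : ℝ) :
    ContDiffOn ℝ 2 (inversion (γ 0) r ∘ γ) (Ioo 0 1) :=
  contDiffOn_const.inversion contDiffOn_const hγ.contDiff.contDiffOn
    fun _ hu ↦ hγ.apply_ne_apply_zero hu

theorem injOn_inversion_comp (hγ : IsArcLengthKnot γ) (hr : r ≠ 0) :
    InjOn (inversion (γ 0) r ∘ γ) (Ioo 0 1) :=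
  (inversion_injective _ hr).comp_injOn (hγ.injOn_Ico.mono Ioo_subset_Ico_self)

theorem contDiffOn_inversionSpeed (hγ : IsArcLengthKnot γ) (r : ℝ) :
    ContDiffOn ℝ 2 (inversionSpeed γ r) (Ioo 0 1) :=
  contDiffOn_const.div ((hγ.contDiff.sub contDiff_const).norm_sq ℝ).contDiffOn fun _ hu ↦
    pow_ne_zero 2 (norm_ne_zero_iff.2 (sub_ne_zero.2 (hγ.apply_ne_apply_zero hu)))

theorem intervalIntegrable_inversionSpeed (hγ : IsArcLengthKnot γ) (r : ℝ)
    (hs : s ∈ Ioo (0 : ℝ) 1) (ht : t ∈ Ioo (0 : ℝ) 1) :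
    IntervalIntegrable (inversionSpeed γ r) volume s t :=
  ((hγ.contDiffOn_inversionSpeed r).continuousOn.mono
    (ordConnected_Ioo.uIcc_subset hs ht)).intervalIntegrable

theorem integral_inversionSpeed (hγ : IsArcLengthKnot γ) (r : ℝ) (hs : s ∈ Ioo (0 : ℝ) 1)
    (ht : t ∈ Ioo (0 : ℝ) 1) :
    ∫ u in s..t, inversionSpeed γ r u = inversionLength γ r t - inversionLength γ r s := by
  have hhalf : (1 / 2 : ℝ) ∈ Ioo (0 : ℝ) 1 := by norm_num
  exact (intervalIntegral.integral_interval_sub_left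
    (hγ.intervalIntegrable_inversionSpeed r hhalf ht)
    (hγ.intervalIntegrable_inversionSpeed r hhalf hs)).symm

theorem hasDerivAt_inversionLength (hγ : IsArcLengthKnot γ) (r : ℝ) (hu : u ∈ Ioo (0 : ℝ) 1) :
    HasDerivAt (inversionLength γ r) (inversionSpeed γ r u) u := by
  have hcont := (hγ.contDiffOn_inversionSpeed r).continuousOn
  exact intervalIntegral.integral_hasDerivAt_right
    (hγ.intervalIntegrable_inversionSpeed r (by norm_num) hu)
    (hcont.stronglyMeasurableAtFilter isOpen_Ioo u hu)
    (hcont.continuousAt (isOpen_Ioo.mem_nhds hu))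

theorem contDiffOn_inversionLength (hγ : IsArcLengthKnot γ) (r : ℝ) :
    ContDiffOn ℝ 3 (inversionLength γ r) (Ioo 0 1) := by
  rw [show (3 : WithTop ℕ∞) = 2 + 1 by norm_num, contDiffOn_succ_iff_deriv_of_isOpen isOpen_Ioo]
  refine ⟨fun u hu ↦ (hγ.hasDerivAt_inversionLength r hu).differentiableAt.differentiableWithinAt,
    by simp, (hγ.contDiffOn_inversionSpeed r).congr fun u hu ↦ ?_⟩
  exact (hγ.hasDerivAt_inversionLength r hu).deriv

theorem deriv_inversionLength_pos (hγ : IsArcLengthKnot γ) (hr : r ≠ 0)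
    (hu : u ∈ Ioo (0 : ℝ) 1) : 0 < deriv (inversionLength γ r) u :=
  (hγ.hasDerivAt_inversionLength r hu).deriv ▸ hγ.inversionSpeed_pos hr hu

theorem abs_integral_norm_deriv_inversion_comp (hγ : IsArcLengthKnot γ) (r : ℝ)
    (hs : s ∈ Ioo (0 : ℝ) 1) (ht : t ∈ Ioo (0 : ℝ) 1) :
    |∫ u in s..t, ‖deriv (inversion (γ 0) r ∘ γ) u‖| =
      |inversionLength γ r t - inversionLength γ r s| := by
  rw [← hγ.integral_inversionSpeed r hs ht, intervalIntegral.integral_congr fun u hu ↦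
    hγ.norm_deriv_inversion_comp r (ordConnected_Ioo.uIcc_subset hs ht hu)]

theorem one_div_norm_inversion_sub_sq_mul (hγ : IsArcLengthKnot γ) (hr : r ≠ 0)
    (hs : s ∈ Ioo (0 : ℝ) 1) (ht : t ∈ Ioo (0 : ℝ) 1) :
    1 / ‖inversion (γ 0) r (γ s) - inversion (γ 0) r (γ t)‖ ^ 2 *
      (inversionSpeed γ r s * inversionSpeed γ r t) = 1 / ‖γ s - γ t‖ ^ 2 := by
  have hs0 := hγ.apply_ne_apply_zero hs
  have ht0 := hγ.apply_ne_apply_zero ht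
  have hs' : ‖γ s - γ 0‖ ≠ 0 := norm_ne_zero_iff.2 (sub_ne_zero.2 hs0)
  have ht' : ‖γ t - γ 0‖ ≠ 0 := norm_ne_zero_iff.2 (sub_ne_zero.2 ht0)
  rw [← dist_eq_norm, dist_inversion_inversion hs0 ht0, inversionSpeed, inversionSpeed]
  simp only [dist_eq_norm]
  field_simp

theorem longKnotDensity_inversion_comp (hγ : IsArcLengthKnot γ) (hr : r ≠ 0)
    (hs : s ∈ Ioo (0 : ℝ) 1) (ht : t ∈ Ioo (0 : ℝ) 1) :
    longKnotDensity (inversion (γ 0) r ∘ γ) s t = knotDensity γ s t - circleDensity s t -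
      (secantKernel (inversionLength γ r) s t - secantKernel circleLine s t) := by
  rw [secantKernel_circleLine (sin_pi_mul_pos hs).ne' (sin_pi_mul_pos ht).ne', longKnotDensity,
    hγ.norm_deriv_inversion_comp r hs, hγ.norm_deriv_inversion_comp r ht,
    hγ.abs_integral_norm_deriv_inversion_comp r hs ht, sub_mul, Function.comp_apply,
    Function.comp_apply, hγ.one_div_norm_inversion_sub_sq_mul hr hs ht, sq_abs, secantKernel,
    (hγ.hasDerivAt_inversionLength r hs).deriv, (hγ.hasDerivAt_inversionLength r ht).deriv,
    knotDensity, circleDensity]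
  ring

theorem exists_abs_inversionSpeed_sub_le (hγ : IsArcLengthKnot γ) (r : ℝ) :
    ∃ M, ∀ u ∈ Ioo (0 : ℝ) 1, |inversionSpeed γ r u - r ^ 2 * circleSpeed u| ≤ M := by
  obtain ⟨C, hC⟩ := hγ.exists_knotDensity_le
  refine ⟨r ^ 2 * (C + Real.pi ^ 2), fun u hu ↦ ?_⟩
  have hu' := Ioo_subset_Icc_self hu
  have h0 : (0 : ℝ) ∈ Icc (0 : ℝ) 1 := left_mem_Icc.2 zero_le_one
  have hdiff : inversionSpeed γ r u - r ^ 2 * circleSpeed u =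
      r ^ 2 * (knotDensity γ u 0 - circleDensity u 0) := by
    rw [inversionSpeed, knotDensity, circleDensity, sub_zero]
    ring
  rw [hdiff, abs_mul, abs_of_nonneg (sq_nonneg r)]
  have hknot := hγ.knotDensity_nonneg hu' h0
  have hcircle := circleDensity_mem_Icc hu' h0
  gcongr
  exact abs_sub_le_of_nonneg_of_le hknot
    ((hC u hu' 0 h0).trans (le_add_of_nonneg_right (sq_nonneg _))) hcircle.1
    (hcircle.2.trans (le_add_of_nonneg_left (hknot.trans (hC u hu' 0 h0))))

end IsArcLengthKnot

end Inversion

section Exhaustion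

open Set Filter Topology

theorem aecover_prod {α β ι : Type*} [MeasurableSpace α] [MeasurableSpace β] {μ : Measure α}
    {ν : Measure β} {l : Filter ι} {φ : ι → Set α} {ψ : ι → Set β}
    (hφ : AECover μ l φ) (hψ : AECover ν l ψ) : AECover (μ.prod ν) l fun i ↦ φ i ×ˢ ψ i where
  ae_eventually_mem := by
    filter_upwards [Measure.quasiMeasurePreserving_fst.ae hφ.ae_eventually_mem,
      Measure.quasiMeasurePreserving_snd.ae hψ.ae_eventually_mem] with p hp₁ hp₂
    filter_upwards [hp₁, hp₂] with i hi₁ hi₂ using ⟨hi₁, hi₂⟩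
  measurableSet i := (hφ.measurableSet i).prod (hψ.measurableSet i)

theorem integrable_and_integral_eq_of_tendsto_integral_sub {α ι : Type*} [MeasurableSpace α]
    {μ : Measure α} {l : Filter ι} [l.NeBot] [l.IsCountablyGenerated] {φ : ι → Set α}
    {f g : α → ℝ} (hφ : AECover μ l φ) (hg : Integrable g μ) (hf : 0 ≤ᵐ[μ] f)
    (hsub : ∀ i, IntegrableOn (fun x ↦ g x - f x) (φ i) μ)
    (hlim : Tendsto (fun i ↦ ∫ x in φ i, (g x - f x) ∂μ) l (𝓝 0)) :
    Integrable f μ ∧ ∫ x, f x ∂μ = ∫ x, g x ∂μ := by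
  have hfi : ∀ i, IntegrableOn f (φ i) μ := fun i ↦ by
    simpa [Pi.sub_def] using hg.integrableOn.sub (hsub i)
  have htendsto : Tendsto (fun i ↦ ∫ x in φ i, f x ∂μ) l (𝓝 (∫ x, g x ∂μ)) := by
    have := (hφ.integral_tendsto_of_countably_generated hg).sub hlim
    rw [sub_zero] at this
    refine this.congr fun i ↦ ?_
    rw [integral_sub hg.integrableOn (hfi i), sub_sub_cancel]
  exact ⟨hφ.integrable_of_integral_tendsto_of_nonneg_ae _ hfi hf htendsto,
    hφ.integral_eq_of_tendsto_of_nonneg_ae _ hf hfi htendsto⟩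

theorem restrict_Ioo_prod_Ioo (a b c d : ℝ) :
    volume.restrict (Ioo a b ×ˢ Ioo c d) = volume.restrict (Icc a b ×ˢ Icc c d) := by
  rw [Measure.volume_eq_prod, ← Measure.prod_restrict, ← Measure.prod_restrict,
    restrict_Ioo_eq_restrict_Icc, restrict_Ioo_eq_restrict_Icc]

theorem Icc_subset_Ioo_zero_one {a : ℝ} (ha : 0 < a) : Icc a (1 - a) ⊆ Ioo 0 1 :=
  Icc_subset_Ioo ha (sub_lt_self 1 ha)

theorem integrableOn_and_setIntegral_eq_of_tendsto_Icc_prod {f g : ℝ × ℝ → ℝ}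
    (hg : IntegrableOn g (Ioo 0 1 ×ˢ Ioo 0 1)) (hf : ∀ p ∈ Ioo 0 1 ×ˢ Ioo 0 1, 0 ≤ f p)
    (hsub : ∀ a > 0, IntegrableOn (fun p ↦ g p - f p) (Icc a (1 - a) ×ˢ Icc a (1 - a)))
    (hlim : Tendsto (fun a ↦ ∫ p in Icc a (1 - a) ×ˢ Icc a (1 - a), (g p - f p)) (𝓝[>] 0) (𝓝 0)) :
    IntegrableOn f (Ioo 0 1 ×ˢ Ioo 0 1) ∧
      ∫ p in Ioo 0 1 ×ˢ Ioo 0 1, f p = ∫ p in Ioo 0 1 ×ˢ Ioo 0 1, g p := by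
  obtain ⟨a, -, ha_pos, ha⟩ := exists_seq_strictAnti_tendsto_nhdsWithin (0 : ℝ)
  have ha0 : Tendsto a atTop (𝓝 0) := ha.mono_right nhdsWithin_le_nhds
  have hcover : AECover (volume.restrict (Ioo (0 : ℝ) 1)) atTop fun n ↦ Icc (a n) (1 - a n) :=
    aecover_Ioo_of_Icc ha0 (by simpa using ha0.const_sub 1)
  have hsquare := aecover_prod hcover hcover
  rw [Measure.prod_restrict, ← Measure.volume_eq_prod] at hsquare
  have hbox : ∀ n, (volume.restrict (Ioo (0 : ℝ) 1 ×ˢ Ioo (0 : ℝ) 1)).restrict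
      (Icc (a n) (1 - a n) ×ˢ Icc (a n) (1 - a n)) =
        volume.restrict (Icc (a n) (1 - a n) ×ˢ Icc (a n) (1 - a n)) := fun n ↦ by
    have hIcc := Icc_subset_Ioo_zero_one (ha_pos n)
    exact Measure.restrict_restrict_of_subset (prod_mono hIcc hIcc)
  refine integrable_and_integral_eq_of_tendsto_integral_sub hsquare hg
    (ae_restrict_of_forall_mem (measurableSet_Ioo.prod measurableSet_Ioo) hf) (fun n ↦ ?_) ?_
  · rw [IntegrableOn, hbox]
    exact hsub (a n) (ha_pos n)
  · simpa only [hbox, Function.comp_def] using hlim.comp ha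

end Exhaustion

section BoundaryTerm

open Set Filter Topology

theorem circleSpeed_one_sub (x : ℝ) : circleSpeed (1 - x) = circleSpeed x := by
  rw [circleSpeed, mul_sub, mul_one, Real.sin_pi_sub, circleSpeed]

theorem circleLine_one_sub (x : ℝ) : circleLine (1 - x) = -circleLine x := by
  simp [circleLine_eq, mul_sub, Real.cos_pi_sub, Real.sin_pi_sub, neg_div]

theorem deriv_circleLine {x : ℝ} (hx : x ∈ Ioo (0 : ℝ) 1) : deriv circleLine x = circleSpeed x :=
  (hasDerivAt_circleLine (sin_pi_mul_pos hx).ne').deriv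

theorem tendsto_circleSpeed_nhdsGT_zero : Tendsto circleSpeed (𝓝[>] 0) atTop := by
  refine tendsto_atTop_mono' _ ?_ ((tendsto_pow_atTop two_ne_zero).comp tendsto_inv_nhdsGT_zero)
  filter_upwards [Ioo_mem_nhdsGT (show (0 : ℝ) < 1 / 2 by norm_num)] with x hx
  simpa using (circleSpeed_sub_inv_sq_mem_Icc (Ioo_subset_Icc_self hx)).1

theorem tendsto_slope_circleLine_nhdsGT_zero :
    Tendsto (fun a ↦ slope circleLine a (1 - a)) (𝓝[>] 0) atTop := by
  have hneg : Tendsto (fun a ↦ -circleLine a) (𝓝[>] 0) atTop := by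
    simpa using tendsto_inv_nhdsGT_zero.atTop_add tendsto_circleLine_add_inv.neg
  have hwidth : Tendsto (fun a : ℝ ↦ 2 / (1 - a - a)) (𝓝[>] 0) (𝓝 2) := by
    have hcont : ContinuousAt (fun a : ℝ ↦ 2 / (1 - a - a)) 0 := by fun_prop (disch := norm_num)
    simpa using hcont.tendsto.mono_left nhdsWithin_le_nhds
  refine (hneg.atTop_mul_pos two_pos hwidth).congr fun a ↦ ?_
  rw [slope_def_field, circleLine_one_sub]
  ring

theorem tendsto_log_sub_log {ι : Type*} {l : Filter ι} {u v : ι → ℝ} {R M : ℝ} (hR : 0 < R)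
    (hv : Tendsto v l atTop) (huv : ∀ᶠ i in l, |u i - R * v i| ≤ M) :
    Tendsto (fun i ↦ Real.log (u i) - Real.log (v i)) l (𝓝 (Real.log R)) := by
  have hratio : Tendsto (fun i ↦ u i / v i) l (𝓝 R) := by
    refine tendsto_iff_norm_sub_tendsto_zero.2 (squeeze_zero' (.of_forall fun _ ↦ norm_nonneg _) ?_
      ((tendsto_const_nhds (x := M)).div_atTop hv))
    filter_upwards [huv, hv.eventually_gt_atTop 0] with i hi hvi
    rw [Real.norm_eq_abs, div_sub' hvi.ne', abs_div, abs_of_pos hvi, mul_comm (v i)]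
    gcongr
  refine (hratio.log hR.ne').congr' ?_
  filter_upwards [hratio.eventually (lt_mem_nhds hR), hv.eventually_gt_atTop 0] with i hi hvi
  exact Real.log_div (fun h ↦ by simp [h] at hi) hvi.ne'

theorem abs_slope_sub_mul_slope_le {f g : ℝ → ℝ} {a b R M : ℝ} (hab : a < b)
    (hf : ∀ x ∈ Icc a b, DifferentiableAt ℝ f x) (hg : ∀ x ∈ Icc a b, DifferentiableAt ℝ g x)
    (hM : ∀ x ∈ Icc a b, |deriv f x - R * deriv g x| ≤ M) :
    |slope f a b - R * slope g a b| ≤ M := by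
  have hbound := (convex_Icc a b).norm_image_sub_le_of_norm_hasDerivWithin_le
    (fun x hx ↦ ((hf x hx).hasDerivAt.sub ((hg x hx).hasDerivAt.const_mul R)).hasDerivWithinAt)
    hM (left_mem_Icc.2 hab.le) (right_mem_Icc.2 hab.le)
  have hslope : slope f a b - R * slope g a b =
      (f b - R * g b - (f a - R * g a)) / (b - a) := by
    rw [slope_def_field, slope_def_field]
    ring
  rw [hslope, abs_div]
  exact div_le_of_le_mul₀ (abs_nonneg _)
    ((abs_nonneg _).trans (hM a (left_mem_Icc.2 hab.le))) hbound

theorem integrableOn_secantKernel_circleLine {a b : ℝ} (hab : Icc a b ⊆ Ioo 0 1) :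
    IntegrableOn (fun p : ℝ × ℝ ↦ secantKernel circleLine p.1 p.2) (Icc a b ×ˢ Icc a b) :=
  integrableOn_secantKernel isOpen_Ioo contDiffOn_circleLine
    (fun _ hx ↦ deriv_circleLine hx ▸ circleSpeed_pos hx) hab

theorem tendsto_log_slope_sub_log_slope {F : ℝ → ℝ} {R M : ℝ}
    (hpos : ∀ x ∈ Ioo (0 : ℝ) 1, 0 < deriv F x) (hR : 0 < R)
    (hM : ∀ x ∈ Ioo (0 : ℝ) 1, |deriv F x - R * circleSpeed x| ≤ M) :
    Tendsto (fun a ↦ Real.log (slope F a (1 - a)) - Real.log (slope circleLine a (1 - a)))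
      (𝓝[>] 0) (𝓝 (Real.log R)) := by
  refine tendsto_log_sub_log (M := M) hR tendsto_slope_circleLine_nhdsGT_zero ?_
  filter_upwards [Ioo_mem_nhdsGT (show (0 : ℝ) < 1 / 2 by norm_num)] with a ha
  have hsub := Icc_subset_Ioo_zero_one ha.1
  refine abs_slope_sub_mul_slope_le (by linarith [ha.2])
    (fun x hx ↦ differentiableAt_of_deriv_ne_zero (hpos x (hsub hx)).ne')
    (fun x hx ↦ (hasDerivAt_circleLine (sin_pi_mul_pos (hsub hx)).ne').differentiableAt)
    fun x hx ↦ ?_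
  rw [deriv_circleLine (hsub hx)]
  exact hM x (hsub hx)

theorem tendsto_setIntegral_secantKernel_sub {F : ℝ → ℝ} {R M : ℝ}
    (hF : ContDiffOn ℝ 3 F (Ioo 0 1)) (hpos : ∀ x ∈ Ioo (0 : ℝ) 1, 0 < deriv F x) (hR : 0 < R)
    (hM : ∀ x ∈ Ioo (0 : ℝ) 1, |deriv F x - R * circleSpeed x| ≤ M) :
    Tendsto (fun a ↦ ∫ p in Icc a (1 - a) ×ˢ Icc a (1 - a),
      (secantKernel F p.1 p.2 - secantKernel circleLine p.1 p.2)) (𝓝[>] 0) (𝓝 0) := by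
  have hsmall : ∀ᶠ a in 𝓝[>] (0 : ℝ), a ∈ Ioo 0 (1 / 2) := Ioo_mem_nhdsGT (by norm_num)
  have hends : ∀ a ∈ Ioo (0 : ℝ) (1 / 2), a ∈ Ioo 0 1 ∧ 1 - a ∈ Ioo 0 1 ∧ a < 1 - a :=
    fun a ha ↦ ⟨⟨ha.1, by linarith [ha.2]⟩, ⟨by linarith [ha.2], by linarith [ha.1]⟩,
      by linarith [ha.2]⟩
  have hleft := tendsto_log_sub_log hR tendsto_circleSpeed_nhdsGT_zero
    (hsmall.mono fun a ha ↦ hM a (hends a ha).1)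
  have hright := tendsto_log_sub_log (u := fun a ↦ deriv F (1 - a)) hR
    tendsto_circleSpeed_nhdsGT_zero
    (hsmall.mono fun a ha ↦ circleSpeed_one_sub a ▸ hM (1 - a) (hends a ha).2.1)
  have hlim := (hleft.add hright).sub
    ((tendsto_log_slope_sub_log_slope hpos hR hM).const_mul 2)
  rw [← two_mul, sub_self] at hlim
  refine hlim.congr' (hsmall.mono fun a ha ↦ ?_)
  obtain ⟨ha₁, ha₂, hlt⟩ := hends a ha
  have hsub := Icc_subset_Ioo_zero_one ha.1
  beta_reduce
  rw [integral_sub (integrableOn_secantKernel isOpen_Ioo hF hpos hsub)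
      (integrableOn_secantKernel_circleLine hsub),
    setIntegral_secantKernel isOpen_Ioo ordConnected_Ioo hF hpos ha₁ ha₂ hlt,
    setIntegral_secantKernel isOpen_Ioo ordConnected_Ioo contDiffOn_circleLine
      (fun _ hx ↦ deriv_circleLine hx ▸ circleSpeed_pos hx) ha₁ ha₂ hlt,
    deriv_circleLine ha₁, deriv_circleLine ha₂, circleSpeed_one_sub]
  ring

end BoundaryTerm

section Energy

open Set Filter Topology EuclideanGeometry

variable {V : Type*} [NormedAddCommGroup V] [InnerProductSpace ℝ V] {γ : ℝ → V} {r : ℝ}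

namespace IsArcLengthKnot

theorem tendsto_setIntegral_secantKernel_inversionLength_sub (hγ : IsArcLengthKnot γ)
    (hr : r ≠ 0) :
    Tendsto (fun a ↦ ∫ p in Icc a (1 - a) ×ˢ Icc a (1 - a),
      (secantKernel (inversionLength γ r) p.1 p.2 - secantKernel circleLine p.1 p.2))
      (𝓝[>] 0) (𝓝 0) := by
  obtain ⟨M, hM⟩ := hγ.exists_abs_inversionSpeed_sub_le r
  exact tendsto_setIntegral_secantKernel_sub (hγ.contDiffOn_inversionLength r)
    (fun _ hu ↦ hγ.deriv_inversionLength_pos hr hu) (sq_pos_of_ne_zero hr)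
    fun u hu ↦ (hγ.hasDerivAt_inversionLength r hu).deriv ▸ hM u hu

theorem integrableOn_secantKernel_inversionLength (hγ : IsArcLengthKnot γ) (hr : r ≠ 0)
    {a b : ℝ} (hab : Icc a b ⊆ Ioo 0 1) :
    IntegrableOn (fun p : ℝ × ℝ ↦ secantKernel (inversionLength γ r) p.1 p.2)
      (Icc a b ×ˢ Icc a b) :=
  integrableOn_secantKernel isOpen_Ioo (hγ.contDiffOn_inversionLength r)
    (fun _ hu ↦ hγ.deriv_inversionLength_pos hr hu) hab

theorem integrableOn_and_setIntegral_longKnotDensity (hγ : IsArcLengthKnot γ) (hr : r ≠ 0) :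
    IntegrableOn (fun p : ℝ × ℝ ↦ longKnotDensity (inversion (γ 0) r ∘ γ) p.1 p.2)
        (Ioo 0 1 ×ˢ Ioo 0 1) ∧
      ∫ p in Ioo (0 : ℝ) 1 ×ˢ Ioo (0 : ℝ) 1, longKnotDensity (inversion (γ 0) r ∘ γ) p.1 p.2 =
        ∫ p in Ioo (0 : ℝ) 1 ×ˢ Ioo (0 : ℝ) 1, (knotDensity γ p.1 p.2 - circleDensity p.1 p.2) := by
  have hg := hγ.integrableOn_knotDensity.sub integrableOn_circleDensity
  rw [IntegrableOn, ← restrict_Ioo_prod_Ioo] at hg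
  have hsub : ∀ a > 0, EqOn
      (fun p : ℝ × ℝ ↦ secantKernel (inversionLength γ r) p.1 p.2 - secantKernel circleLine p.1 p.2)
      (fun p ↦ knotDensity γ p.1 p.2 - circleDensity p.1 p.2 -
        longKnotDensity (inversion (γ 0) r ∘ γ) p.1 p.2)
      (Icc a (1 - a) ×ˢ Icc a (1 - a)) := fun a ha p hp ↦ by
    have hIcc := Icc_subset_Ioo_zero_one ha
    simp only [hγ.longKnotDensity_inversion_comp hr (hIcc hp.1) (hIcc hp.2), sub_sub_cancel]
  have hbox : ∀ a : ℝ, MeasurableSet (Icc a (1 - a) ×ˢ Icc a (1 - a)) := fun a ↦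
    measurableSet_Icc.prod measurableSet_Icc
  refine integrableOn_and_setIntegral_eq_of_tendsto_Icc_prod hg (fun p hp ↦ ?_) (fun a ha ↦ ?_) ?_
  · exact longKnotDensity_nonneg isOpen_Ioo ordConnected_Ioo
      ((hγ.contDiffOn_inversion_comp r).of_le one_le_two) (hγ.injOn_inversion_comp hr) hp.1 hp.2
  · have hIcc := Icc_subset_Ioo_zero_one ha
    exact ((hγ.integrableOn_secantKernel_inversionLength hr hIcc).sub
      (integrableOn_secantKernel_circleLine hIcc)).congr_fun (hsub a ha) (hbox a)
  · refine (hγ.tendsto_setIntegral_secantKernel_inversionLength_sub hr).congr' ?_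
    filter_upwards [self_mem_nhdsWithin] with a ha using setIntegral_congr_fun (hbox a) (hsub a ha)

end IsArcLengthKnot

theorem energy_open_long_knot_general (hγ : IsArcLengthKnot γ) (hr : r ≠ 0) :
    IntegrableOn (fun p : ℝ × ℝ ↦ longKnotDensity (inversion (γ 0) r ∘ γ) p.1 p.2)
        (Ioo 0 1 ×ˢ Ioo 0 1) ∧
      IntegrableOn (fun p : ℝ × ℝ ↦ knotDensity γ p.1 p.2) (Icc 0 1 ×ˢ Icc 0 1) ∧
      ∫ p in Ioo (0 : ℝ) 1 ×ˢ Ioo (0 : ℝ) 1, longKnotDensity (inversion (γ 0) r ∘ γ) p.1 p.2 =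
        (∫ p in Icc (0 : ℝ) 1 ×ˢ Icc (0 : ℝ) 1, knotDensity γ p.1 p.2) - 4 := by
  obtain ⟨hint, heq⟩ := hγ.integrableOn_and_setIntegral_longKnotDensity hr
  refine ⟨hint, hγ.integrableOn_knotDensity, ?_⟩
  rw [heq, restrict_Ioo_prod_Ioo,
    integral_sub hγ.integrableOn_knotDensity integrableOn_circleDensity, setIntegral_circleDensity]

theorem inv3_eq_inversion (c : E3) (r : ℝ) : inv3 c r = inversion c r := by
  funext x
  simp only [inv3, inversion, vsub_eq_sub, vadd_eq_add, dist_eq_norm, div_pow]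
  rw [add_comm]

end Energy

/-- Inverting a closed knot of length 1 in a sphere centered at a point of the knot
produces an open long knot `η = I_{c,r} ∘ γ` on `(0,1)`, and the (un-renormalized)
energy of the open long knot equals `E⁽²⁾∘` of the closed knot:
`∬_{(0,1)²} (1/|η(s)−η(t)|² − 1/ℓ_η(s,t)²)|η′(s)||η′(t)| ds dt
  = ∬ (1/|γ(s)−γ(t)|² − 1/d(s,t)²) ds dt − 4`, both sides being finite. -/
theorem energy_open_long_knot (γ : ℝ → E3)
    (hC2 : ContDiff ℝ 2 γ)
    (hper : Function.Periodic γ 1)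
    (hinj : ∀ s t : ℝ, γ s = γ t → ∃ n : ℤ, s - t = n)
    (hunit : ∀ s : ℝ, ‖deriv γ s‖ = 1)
    (r : ℝ) (hr : 0 < r) :
    IntegrableOn
      (fun p : ℝ × ℝ =>
        (1 / ‖inv3 (γ 0) r (γ p.1) - inv3 (γ 0) r (γ p.2)‖ ^ 2 -
            1 / arcLen (inv3 (γ 0) r ∘ γ) p.1 p.2 ^ 2) *
          (‖deriv (inv3 (γ 0) r ∘ γ) p.1‖ * ‖deriv (inv3 (γ 0) r ∘ γ) p.2‖))
      (Set.Ioo 0 1 ×ˢ Set.Ioo 0 1) ∧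
    IntegrableOn
      (fun p : ℝ × ℝ => 1 / ‖γ p.1 - γ p.2‖ ^ 2 - 1 / arcd p.1 p.2 ^ 2)
      (Set.Icc 0 1 ×ˢ Set.Icc 0 1) ∧
    (∫ p in Set.Ioo (0:ℝ) 1 ×ˢ Set.Ioo (0:ℝ) 1,
        (1 / ‖inv3 (γ 0) r (γ p.1) - inv3 (γ 0) r (γ p.2)‖ ^ 2 -
            1 / arcLen (inv3 (γ 0) r ∘ γ) p.1 p.2 ^ 2) *
          (‖deriv (inv3 (γ 0) r ∘ γ) p.1‖ * ‖deriv (inv3 (γ 0) r ∘ γ) p.2‖)) =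
      (∫ p in Set.Icc (0:ℝ) 1 ×ˢ Set.Icc (0:ℝ) 1,
        (1 / ‖γ p.1 - γ p.2‖ ^ 2 - 1 / arcd p.1 p.2 ^ 2)) - 4 := by
  simp only [inv3_eq_inversion]
  exact energy_open_long_knot_general ⟨hC2, hper, hinj, hunit⟩ hr.ne'
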